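/- Under the assumptions π(x) ≤ C_π η(x) and g the modified soft-plus function, the map f ↦ L_k(f) = E_π[ (1/2) R_k(f)² − log ∂ₖ R_k(f) ], where R_k(f)(x) = f(x_{<k},0) + ∫_0^{x_k} g(∂ₖ f(x_{<k},t)) dt, is continuous from H^{1,k}(ℝ^k) (with norm ‖f‖² = ‖f‖²_{L²} + ‖∂ₖ f‖²_{L²}) to ℝ. -/

import Mathlib

open MeasureTheory Set

/-- The modified soft-plus function `g(ξ) = log(2^ξ + 1) / log 2`. -/
noncomputable def softg (ξ : ℝ) : ℝ := Real.log ((2 : ℝ) ^ ξ + 1) / Real.log 2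

/-- The standard Gaussian density on `ℝ^d`. -/
noncomputable def gaussDensity (d : ℕ) (x : Fin d → ℝ) : ℝ :=
  (2 * Real.pi) ^ (-(d : ℝ) / 2) * Real.exp (-(∑ i, x i ^ 2) / 2)

/-- The rectified map `R_k(f)(x) = f(x_{<k},0) + ∫_0^{x_k} g(∂ₖ f(x_{<k},t)) dt`,
where `f'` denotes the partial derivative of `f` in the last coordinate. -/
noncomputable def rectifiedMap (k : ℕ) (f f' : (Fin (k + 1) → ℝ) → ℝ)
    (x : Fin (k + 1) → ℝ) : ℝ :=
  f (Function.update x (Fin.last k) 0) +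
    ∫ t in (0 : ℝ)..(x (Fin.last k)), softg (f' (Function.update x (Fin.last k) t))

/-- The objective `L_k(f) = E_π[(1/2) R_k(f)² − log ∂ₖ R_k(f)]`, where
`∂ₖ R_k(f) = g(∂ₖ f)` and the expectation is with respect to the density `p`. -/
noncomputable def mapObjective (d k : ℕ) (hkd : k + 1 ≤ d)
    (p : (Fin d → ℝ) → ℝ) (f f' : (Fin (k + 1) → ℝ) → ℝ) : ℝ :=
  ∫ x : Fin d → ℝ,
    ((1 / 2) * rectifiedMap k f f' (fun i => x (Fin.castLE hkd i)) ^ 2 -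
      Real.log (softg (f' (fun i => x (Fin.castLE hkd i))))) * p x

open ProbabilityTheory in
lemma aux_gauss_prod (d : ℕ) (x : Fin d → ℝ) :
    gaussDensity d x = ∏ i, gaussianPDFReal 0 1 (x i) := by
  unfold gaussDensity
  simp only [gaussianPDFReal_def, Finset.prod_mul_distrib, Finset.prod_const, Finset.card_univ,
    Fintype.card_fin]
  rw [← Real.exp_sum]
  congr 1
  · simp only [NNReal.coe_one, mul_one]
    rw [Real.sqrt_eq_rpow, ← Real.rpow_neg (by positivity), ← Real.rpow_natCast,
      ← Real.rpow_mul (by positivity)]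
    congr 1
    ring
  · congr 1
    simp only [NNReal.coe_one, mul_one, sub_zero]
    rw [← Finset.sum_div, Finset.sum_neg_distrib]

open ProbabilityTheory in
lemma aux_pi_gauss (d : ℕ) :
    (volume : Measure (Fin d → ℝ)).withDensity (fun x => ENNReal.ofReal (gaussDensity d x)) =
      Measure.pi (fun _ => gaussianReal 0 1) := by
  symm
  apply Measure.pi_eq
  intro s hs
  rw [withDensity_apply _ (MeasurableSet.univ_pi hs)]
  have hint : Integrable (fun x : Fin d → ℝ =>
      ∏ i, (s i).indicator (gaussianPDFReal 0 1) (x i)) :=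
    Integrable.fintype_prod (f := fun i => (s i).indicator (gaussianPDFReal 0 1))
      (fun i => (integrable_gaussianPDFReal 0 1).indicator (hs i))
  have e : ∀ x : Fin d → ℝ, (Set.univ.pi s).indicator
      (fun x => ENNReal.ofReal (gaussDensity d x)) x =
      ENNReal.ofReal (∏ i, (s i).indicator (gaussianPDFReal 0 1) (x i)) := by
    intro x
    by_cases hx : x ∈ Set.univ.pi s
    · rw [Set.indicator_of_mem hx, aux_gauss_prod]
      congr 1
      refine Finset.prod_congr rfl fun i _ => ?_
      rw [Set.indicator_of_mem (hx i (Set.mem_univ i))]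
    · rw [Set.indicator_of_notMem hx]
      have : ∃ i, x i ∉ s i := by simpa [Set.mem_pi] using hx
      obtain ⟨i, hi⟩ := this
      rw [Finset.prod_eq_zero (Finset.mem_univ i) (Set.indicator_of_notMem hi _)]
      simp
  rw [← lintegral_indicator (MeasurableSet.univ_pi hs), lintegral_congr e,
    ← ofReal_integral_eq_lintegral_ofReal hint
      (Filter.Eventually.of_forall fun x => Finset.prod_nonneg fun i _ =>
        Set.indicator_nonneg (fun y _ => gaussianPDFReal_nonneg 0 1 y) _),
    integral_fintype_prod_volume_eq_prod
      (fun i => (s i).indicator (gaussianPDFReal 0 1)),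
    ENNReal.ofReal_prod_of_nonneg (fun i _ => integral_nonneg fun x =>
      Set.indicator_nonneg (fun y _ => gaussianPDFReal_nonneg 0 1 y) _)]
  refine Finset.prod_congr rfl fun i _ => ?_
  rw [gaussianReal_apply_eq_integral 0 one_ne_zero, integral_indicator (hs i)]

open ProbabilityTheory in
lemma aux_pdf_le_one (x : ℝ) : gaussianPDFReal 0 1 x ≤ 1 := by
  rw [gaussianPDFReal_def]
  have h1 : (Real.sqrt (2 * Real.pi * (1 : NNReal)))⁻¹ ≤ 1 := by
    apply inv_le_one_of_one_le₀
    rw [Real.one_le_sqrt]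
    have := Real.pi_gt_three
    simp; linarith
  have h2 : Real.exp (-(x - 0) ^ 2 / (2 * (1 : NNReal))) ≤ 1 := by
    rw [Real.exp_le_one_iff]
    simp
    have := sq_nonneg x
    linarith
  exact mul_le_one₀ h1 (Real.exp_pos _).le h2

open ProbabilityTheory in
lemma aux_gaussian_le_volume : gaussianReal 0 1 ≤ (volume : Measure ℝ) := by
  rw [gaussianReal_of_var_ne_zero _ one_ne_zero]
  conv_rhs => rw [← withDensity_one (μ := (volume : Measure ℝ))]
  apply withDensity_mono
  refine Filter.Eventually.of_forall fun x => ?_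
  simpa [gaussianPDF] using aux_pdf_le_one x

open ProbabilityTheory in
lemma aux_pi_le_volume (k : ℕ) :
    Measure.pi (fun _ : Fin k => gaussianReal 0 1) ≤ (volume : Measure (Fin k → ℝ)) := by
  rw [← aux_pi_gauss]
  conv_rhs => rw [← withDensity_one (μ := (volume : Measure (Fin k → ℝ)))]
  apply withDensity_mono
  refine Filter.Eventually.of_forall fun x => ?_
  simp only [Pi.one_apply, ENNReal.ofReal_le_one]
  rw [aux_gauss_prod]
  exact Finset.prod_le_one (fun i _ => gaussianPDFReal_nonneg _ _ _) fun i _ => aux_pdf_le_one _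

/-- Splitting off the last of the first `k+1` coordinates. -/
def auxProj (d k : ℕ) (hkd : k + 1 ≤ d) (x : Fin d → ℝ) : (Fin k → ℝ) × ℝ :=
  (fun i => x (Fin.castLE hkd i.castSucc), x (Fin.castLE hkd (Fin.last k)))

lemma aux_measurable_proj (d k : ℕ) (hkd : k + 1 ≤ d) : Measurable (auxProj d k hkd) := by
  unfold auxProj
  fun_prop

lemma aux_snoc_mp {k : ℕ} (γ : Measure ℝ) [SigmaFinite γ] :
    MeasurePreserving (fun x : Fin (k + 1) → ℝ => ((fun i => x i.castSucc, x (Fin.last k)) :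
      (Fin k → ℝ) × ℝ)) (Measure.pi fun _ => γ) ((Measure.pi fun _ => γ).prod γ) := by
  have h := measurePreserving_piFinSuccAbove (fun _ : Fin (k + 1) => γ) (Fin.last k)
  have h2 := (Measure.measurePreserving_swap (μ := γ) (ν := Measure.pi fun _ : Fin k => γ))
  convert h2.comp h using 1
  ext x i
  · simp [Fin.init, MeasurableEquiv.piFinSuccAbove, Fin.insertNthEquiv]
  · simp [MeasurableEquiv.piFinSuccAbove, Fin.insertNthEquiv]

open ProbabilityTheory in
lemma aux_map_proj (d k : ℕ) (hkd : k + 1 ≤ d) :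
    (Measure.pi (fun _ : Fin d => gaussianReal 0 1)).map (auxProj d k hkd) =
      (Measure.pi fun _ : Fin k => gaussianReal 0 1).prod (gaussianReal 0 1) := by
  have hind : iIndepFun (fun (i : Fin d) (ω : Fin d → ℝ) => ω i)
      (Measure.pi (fun _ : Fin d => gaussianReal 0 1)) :=
    iIndepFun_pi (X := fun _ x => x) (fun i => aemeasurable_id)
  have h2 := hind.precomp (Fin.castLE_injective hkd)
  rw [iIndepFun_iff_map_fun_eq_pi_map (fun i => (measurable_pi_apply _).aemeasurable)] at h2
  have h3 : ∀ i : Fin d, (Measure.pi (fun _ : Fin d => gaussianReal 0 1)).map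
      (fun ω : Fin d → ℝ => ω i) = gaussianReal 0 1 := fun i =>
    (measurePreserving_eval (fun _ : Fin d => gaussianReal 0 1) i).map_eq
  simp only [h3] at h2
  rw [← (aux_snoc_mp (k := k) (gaussianReal 0 1)).map_eq, ← h2, Measure.map_map]
  · rfl
  · fun_prop
  · fun_prop

open ProbabilityTheory in
lemma aux_dom0 (d k : ℕ) (hkd : k + 1 ≤ d) (Cπ : ℝ)
    (p : (Fin d → ℝ) → ℝ) (hp : ∀ x, p x ≤ Cπ * gaussDensity d x) :
    ((volume : Measure (Fin d → ℝ)).withDensity (fun x => ENNReal.ofReal (p x))).map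
      (auxProj d k hkd) ≤ ENNReal.ofReal Cπ •
        ((Measure.pi fun _ : Fin k => gaussianReal 0 1).prod (gaussianReal 0 1)) := by
  have h1 : (volume : Measure (Fin d → ℝ)).withDensity (fun x => ENNReal.ofReal (p x)) ≤
      ENNReal.ofReal Cπ • Measure.pi (fun _ => gaussianReal 0 1) := by
    rw [← aux_pi_gauss, ← withDensity_smul' _ _ ENNReal.ofReal_ne_top]
    apply withDensity_mono
    refine Filter.Eventually.of_forall fun x => ?_
    simp only [Pi.smul_apply, smul_eq_mul]
    rw [← ENNReal.ofReal_mul']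
    · exact ENNReal.ofReal_le_ofReal (hp x)
    · rw [aux_gauss_prod]
      exact Finset.prod_nonneg fun i _ => gaussianPDFReal_nonneg _ _ _
  refine (Measure.map_mono h1 (aux_measurable_proj d k hkd)).trans ?_
  rw [Measure.map_smul, aux_map_proj]

open ProbabilityTheory in
lemma aux_dom (d k : ℕ) (hkd : k + 1 ≤ d) (Cπ : ℝ)
    (p : (Fin d → ℝ) → ℝ) (hp : ∀ x, p x ≤ Cπ * gaussDensity d x) :
    ((volume : Measure (Fin d → ℝ)).withDensity (fun x => ENNReal.ofReal (p x))).map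
      (auxProj d k hkd) ≤ ENNReal.ofReal Cπ •
        ((volume : Measure (Fin k → ℝ)).prod (gaussianReal 0 1)) := by
  refine (aux_dom0 d k hkd Cπ p hp).trans ?_
  rw [Measure.le_iff]
  intro s hs
  simp only [Measure.smul_apply, smul_eq_mul]
  refine mul_le_mul' le_rfl ?_
  rw [Measure.prod_apply_symm hs, Measure.prod_apply_symm hs]
  exact lintegral_mono fun y => aux_pi_le_volume k _

open ProbabilityTheory in
lemma aux_prod_le (k : ℕ) : (volume : Measure (Fin k → ℝ)).prod (gaussianReal 0 1) ≤
    (volume : Measure ((Fin k → ℝ) × ℝ)) := by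
  rw [Measure.le_iff]
  intro s hs
  rw [Measure.volume_eq_prod, Measure.prod_apply hs, Measure.prod_apply hs]
  exact lintegral_mono fun y => aux_gaussian_le_volume _

lemma aux_log2_pos : 0 < Real.log 2 := Real.log_pos (by norm_num)

lemma aux_arg_pos (x : ℝ) : 1 < (2 : ℝ) ^ x + 1 := by
  have := Real.rpow_pos_of_pos (show (0 : ℝ) < 2 by norm_num) x
  linarith

lemma aux_softg_pos (x : ℝ) : 0 < softg x :=
  div_pos (Real.log_pos (aux_arg_pos x)) aux_log2_pos

lemma aux_softg_deriv (x : ℝ) :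
    HasDerivAt softg ((2 : ℝ) ^ x / ((2 : ℝ) ^ x + 1)) x := by
  have h1 : HasDerivAt (fun x : ℝ => (2 : ℝ) ^ x + 1) ((2 : ℝ) ^ x * Real.log 2) x := by
    have := (Real.hasStrictDerivAt_const_rpow (show (0 : ℝ) < 2 by norm_num) x).hasDerivAt
    exact this.add_const 1
  have h2 := (h1.log (by have := aux_arg_pos x; linarith)).div_const (Real.log 2)
  have e : (2 : ℝ) ^ x / ((2 : ℝ) ^ x + 1) =
      (2 : ℝ) ^ x * Real.log 2 / ((2 : ℝ) ^ x + 1) / Real.log 2 := by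
    rw [div_right_comm, mul_div_cancel_right₀ _ aux_log2_pos.ne']
  rw [e]
  exact h2

lemma aux_lip (u u' : ℝ → ℝ) (h : ∀ x, HasDerivAt u (u' x) x) (hb : ∀ x, |u' x| ≤ 1) (a b : ℝ) :
    |u a - u b| ≤ |a - b| := by
  have := Convex.norm_image_sub_le_of_norm_hasDerivWithin_le (f := u) (f' := u') (s := Set.univ)
    (x := b) (y := a) (C := 1)
    (fun x _ => (h x).hasDerivWithinAt) (fun x _ => hb x) convex_univ trivial trivial
  simpa using this

lemma aux_softg_lip (a b : ℝ) : |softg a - softg b| ≤ |a - b| := by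
  refine aux_lip _ _ aux_softg_deriv (fun x => ?_) a b
  have h := Real.rpow_pos_of_pos (show (0 : ℝ) < 2 by norm_num) x
  rw [abs_of_pos (by positivity), div_le_one (by positivity)]
  linarith

lemma aux_logg_lip (a b : ℝ) : |Real.log (softg a) - Real.log (softg b)| ≤ |a - b| := by
  refine aux_lip (fun x => Real.log (softg x)) _
    (fun x => (aux_softg_deriv x).log (aux_softg_pos x).ne') (fun x => ?_) a b
  have h := Real.rpow_pos_of_pos (show (0 : ℝ) < 2 by norm_num) x
  have hg := aux_softg_pos x
  rw [abs_of_pos (by positivity), div_le_one hg]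
  have hl : Real.log 2 ≤ 1 := by have := Real.log_two_lt_d9; linarith
  have h3 : (2 : ℝ) ^ x / ((2 : ℝ) ^ x + 1) ≤ Real.log ((2 : ℝ) ^ x + 1) := by
    have := Real.one_sub_inv_le_log_of_pos (show 0 < (2 : ℝ) ^ x + 1 by positivity)
    refine le_trans (le_of_eq ?_) this
    field_simp
    ring
  refine h3.trans ?_
  unfold softg
  rw [le_div_iff₀ aux_log2_pos]
  nlinarith [Real.log_pos (aux_arg_pos x)]

lemma aux_softg_zero : softg 0 = 1 := by
  unfold softg
  have := aux_log2_pos.ne'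
  rw [Real.rpow_zero, one_add_one_eq_two, div_self this]

lemma aux_softg_cont : Continuous softg :=
  continuous_iff_continuousAt.2 fun x => (aux_softg_deriv x).continuousAt

lemma aux_logg_cont : Continuous (fun x => Real.log (softg x)) :=
  aux_softg_cont.log fun x => (aux_softg_pos x).ne'

lemma aux_int_of_sq {u : ℝ → ℝ} (hm : Measurable u) (h : Integrable (fun t => u t ^ 2))
    (s : Set ℝ) (hs : volume s ≠ ⊤) : IntegrableOn u s := by
  have h1 : IntegrableOn (fun t => 1 + u t ^ 2) s :=
    (integrableOn_const hs).add h.integrableOn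
  refine Integrable.mono' h1 hm.aestronglyMeasurable (Filter.Eventually.of_forall fun t => ?_)
  rw [Real.norm_eq_abs, abs_le]
  constructor <;> nlinarith [sq_nonneg (u t - 1), sq_nonneg (u t + 1), sq_nonneg (u t)]

/-- Cauchy-Schwarz on an interval. -/
lemma aux_cs {u : ℝ → ℝ} (hm : Measurable u) (h : Integrable (fun t => u t ^ 2)) (s : ℝ) :
    (∫ t in Set.uIoc 0 s, |u t|) ^ 2 ≤ |s| * ∫ t, u t ^ 2 := by
  have hv : (volume (Set.uIoc 0 s)).toReal = |s| := by simp [Real.volume_uIoc]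
  have hfin : volume (Set.uIoc 0 s) ≠ ⊤ := by simp [Real.volume_uIoc]
  have hi : IntegrableOn (fun t => |u t|) (Set.uIoc 0 s) := (aux_int_of_sq hm h _ hfin).abs
  have hsq : IntegrableOn (fun t => u t ^ 2) (Set.uIoc 0 s) := h.integrableOn
  have hq : ∀ c : ℝ, 0 ≤ |s| * (c * c) + (-2 * ∫ t in Set.uIoc 0 s, |u t|) * c +
      ∫ t in Set.uIoc 0 s, u t ^ 2 := by
    intro c
    have h0 : 0 ≤ ∫ t in Set.uIoc 0 s, (|u t| - c) ^ 2 := integral_nonneg fun t => sq_nonneg _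
    have e : ∀ t, (|u t| - c) ^ 2 = (u t ^ 2 - (2 * c) * |u t|) + c * c := by
      intro t
      rw [sub_sq, sq_abs]; ring
    simp_rw [e] at h0
    have hI1 : IntegrableOn (fun t => u t ^ 2 - (2 * c) * |u t|) (Set.uIoc 0 s) :=
      hsq.sub (hi.const_mul _)
    rw [integral_add hI1 (integrableOn_const hfin),
      integral_sub hsq (hi.const_mul _), integral_const_mul, setIntegral_const,
      Measure.real, hv] at h0
    simp only [smul_eq_mul] at h0
    linarith
  have := discrim_le_zero hq
  unfold discrim at this
  have h2 : ∫ t in Set.uIoc 0 s, u t ^ 2 ≤ ∫ t, u t ^ 2 :=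
    setIntegral_le_integral h (Filter.Eventually.of_forall fun t => sq_nonneg _)
  nlinarith [abs_nonneg s]

lemma aux_trace {u u' : ℝ → ℝ} (hd : ∀ t, HasDerivAt u (u' t) t) (hm' : Measurable u')
    (h : Integrable (fun t => u t ^ 2)) (h' : Integrable (fun t => u' t ^ 2)) :
    u 0 ^ 2 ≤ 2 * ((∫ t, u t ^ 2) + ∫ t, u' t ^ 2) := by
  have key : ∀ t ∈ Ioc (0 : ℝ) 1, u 0 ^ 2 ≤ 2 * u t ^ 2 + 2 * ∫ t, u' t ^ 2 := by
    intro t ht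
    have hft : ∫ r in (0 : ℝ)..t, u' r = u t - u 0 :=
      intervalIntegral.integral_eq_sub_of_hasDerivAt (fun r _ => hd r)
        (intervalIntegrable_iff.2 (aux_int_of_sq hm' h' _ (by simp [Real.volume_uIoc])))
    have hle : |∫ r in (0 : ℝ)..t, u' r| ≤ ∫ r in Set.uIoc 0 t, |u' r| := by
      simpa using intervalIntegral.norm_integral_le_integral_norm_uIoc (f := u') (a := 0) (b := t)
        (μ := volume)
    have hcs := aux_cs hm' h' t
    rw [abs_of_pos ht.1] at hcs
    have hn : 0 ≤ ∫ t, u' t ^ 2 := integral_nonneg fun t => sq_nonneg _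
    have h1 : (u t - u 0) ^ 2 ≤ ∫ t, u' t ^ 2 := by
      rw [← hft, ← sq_abs]
      calc _ ≤ (∫ r in Set.uIoc 0 t, |u' r|) ^ 2 := by gcongr
        _ ≤ _ := hcs
        _ ≤ _ := by nlinarith [ht.2]
    nlinarith [sq_nonneg (2 * u t - u 0)]
  have hI : IntegrableOn (fun t => 2 * u t ^ 2 + 2 * ∫ t, u' t ^ 2) (Ioc 0 1) :=
    (h.const_mul 2).integrableOn.add (integrableOn_const (by simp))
  have := setIntegral_mono_on (integrableOn_const (by simp)) hI measurableSet_Ioc key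
  rw [setIntegral_const, integral_add (h.const_mul 2).integrableOn (integrableOn_const (by simp)),
    integral_const_mul, setIntegral_const] at this
  simp at this
  have h2 : ∫ t in Ioc (0 : ℝ) 1, u t ^ 2 ≤ ∫ t, u t ^ 2 :=
    setIntegral_le_integral h (Filter.Eventually.of_forall fun t => sq_nonneg _)
  linarith

lemma aux_sub_sq {α : Type*} [MeasurableSpace α] {μ : Measure α} {u v : α → ℝ} (hu : Measurable u)
    (hv : Measurable v)
    (h : Integrable (fun t => u t ^ 2) μ) (h' : Integrable (fun t => v t ^ 2) μ) :
    Integrable (fun t => (u t - v t) ^ 2) μ := by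
  refine Integrable.mono' ((h.const_mul 2).add (h'.const_mul 2))
    ((hu.sub hv).pow_const 2).aestronglyMeasurable (Filter.Eventually.of_forall fun t => ?_)
  simp only [Real.norm_eq_abs, abs_sq, Pi.add_apply]
  nlinarith [sq_nonneg (u t + v t)]

lemma aux_line {u u' v v' : ℝ → ℝ} (hu : ∀ t, HasDerivAt u (u' t) t)
    (hv : ∀ t, HasDerivAt v (v' t) t) (hum : Measurable u) (hvm : Measurable v)
    (hum' : Measurable u') (hvm' : Measurable v')
    (h1 : Integrable (fun t => u t ^ 2)) (h1' : Integrable (fun t => u' t ^ 2))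
    (h2 : Integrable (fun t => v t ^ 2)) (h2' : Integrable (fun t => v' t ^ 2)) (s : ℝ) :
    ((u 0 + ∫ t in (0 : ℝ)..s, softg (u' t)) - (v 0 + ∫ t in (0 : ℝ)..s, softg (v' t))) ^ 2 ≤
      (4 + 2 * |s|) * ((∫ t, (u t - v t) ^ 2) + ∫ t, (u' t - v' t) ^ 2) := by
  have hs := aux_sub_sq hum hvm h1 h2
  have hs' := aux_sub_sq hum' hvm' h1' h2'
  have htr := aux_trace (u := fun t => u t - v t) (fun t => (hu t).sub (hv t)) (hum'.sub hvm') hs hs'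
  have hcs := aux_cs (hum'.sub hvm') hs' s
  have hfin : volume (Set.uIoc 0 s) ≠ ⊤ := by simp [Real.volume_uIoc]
  have hgi : ∀ w : ℝ → ℝ, Measurable w → Integrable (fun t => w t ^ 2) →
      IntervalIntegrable (fun t => softg (w t)) volume 0 s := by
    intro w hw hw2
    rw [intervalIntegrable_iff]
    refine Integrable.mono' ((aux_int_of_sq hw hw2 _ hfin).abs.add
      (integrableOn_const (C := (1 : ℝ)) hfin))
      (aux_softg_cont.measurable.comp hw).aestronglyMeasurable
      (Filter.Eventually.of_forall fun t => ?_)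
    have := aux_softg_lip (w t) 0
    rw [aux_softg_zero, sub_zero] at this
    have h3 := abs_le.1 this
    simp only [Real.norm_eq_abs, Pi.add_apply]
    rw [abs_of_pos (aux_softg_pos _)]
    linarith
  have hd : |(∫ t in (0 : ℝ)..s, softg (u' t)) - ∫ t in (0 : ℝ)..s, softg (v' t)| ≤
      ∫ t in Set.uIoc 0 s, |u' t - v' t| := by
    rw [← intervalIntegral.integral_sub (hgi _ hum' h1') (hgi _ hvm' h2')]
    refine le_trans (intervalIntegral.norm_integral_le_integral_norm_uIoc
      (f := fun t => softg (u' t) - softg (v' t)) (a := 0) (b := s) (μ := volume)) ?_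
    refine setIntegral_mono_on ?_ ((aux_int_of_sq (hum'.sub hvm') hs' _ hfin).abs)
      measurableSet_uIoc fun t _ => aux_softg_lip _ _
    exact (intervalIntegrable_iff.1 ((hgi _ hum' h1').sub (hgi _ hvm' h2'))).norm
  set A := (∫ t in (0 : ℝ)..s, softg (u' t)) - ∫ t in (0 : ℝ)..s, softg (v' t) with hA
  have hA2 : A ^ 2 ≤ |s| * ∫ t, (u' t - v' t) ^ 2 := by
    rw [← sq_abs]
    calc _ ≤ (∫ t in Set.uIoc 0 s, |u' t - v' t|) ^ 2 := by gcongr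
      _ ≤ _ := hcs
  have hn : 0 ≤ ∫ t, (u t - v t) ^ 2 := integral_nonneg fun t => sq_nonneg _
  have e : (u 0 + ∫ t in (0 : ℝ)..s, softg (u' t)) - (v 0 + ∫ t in (0 : ℝ)..s, softg (v' t)) =
    (u 0 - v 0) + A := by rw [hA]; ring
  rw [e]
  have := mul_nonneg (abs_nonneg s) hn
  nlinarith [sq_nonneg (u 0 - v 0 - A)]

/-- The rectified map on a product space. -/
noncomputable def auxRR {X : Type*} (F F' : X × ℝ → ℝ) (z : X × ℝ) : ℝ :=
  F (z.1, 0) + ∫ t in (0 : ℝ)..z.2, softg (F' (z.1, t))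

structure AuxAdm {X : Type*} [MeasurableSpace X] (ν : Measure X) (F F' : X × ℝ → ℝ) : Prop where
  der : ∀ a t, HasDerivAt (fun t => F (a, t)) (F' (a, t)) t
  meas : Measurable F
  meas' : Measurable F'
  int : Integrable (fun z => F z ^ 2) (ν.prod volume)
  int' : Integrable (fun z => F' z ^ 2) (ν.prod volume)

lemma aux_RR_meas {X : Type*} [MeasurableSpace X] {F F' : X × ℝ → ℝ} (hF : Measurable F)
    (hF' : Measurable F') : Measurable (auxRR F F') := by
  unfold auxRR
  refine Measurable.add (by fun_prop) ?_
  have hbase : Measurable (fun q : (X × ℝ) × ℝ => softg (F' (q.1.1, q.2))) :=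
    aux_softg_cont.measurable.comp (by fun_prop)
  have key : ∀ S : Set ((X × ℝ) × ℝ), MeasurableSet S →
      Measurable (fun z : X × ℝ => ∫ t, S.indicator
        (fun q : (X × ℝ) × ℝ => softg (F' (q.1.1, q.2))) (z, t)) := by
    intro S hS
    exact ((hbase.indicator hS).stronglyMeasurable.integral_prod_right').measurable
  have h1 := key ({q | 0 < q.2} ∩ {q | q.2 ≤ q.1.2})
    ((measurableSet_lt (by fun_prop) (by fun_prop)).inter
      (measurableSet_le (by fun_prop) (by fun_prop)))
  have h2 := key ({q | q.1.2 < q.2} ∩ {q | q.2 ≤ 0})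
    ((measurableSet_lt (by fun_prop) (by fun_prop)).inter
      (measurableSet_le (by fun_prop) (by fun_prop)))
  convert h1.sub h2 using 1
  ext z
  simp only [intervalIntegral, Pi.sub_apply]
  rw [← integral_indicator measurableSet_Ioc, ← integral_indicator measurableSet_Ioc]
  rfl

lemma aux_diff {X : Type*} [MeasurableSpace X] {ν : Measure X} [SigmaFinite ν]
    {γ : Measure ℝ} [IsFiniteMeasure γ] (hγ : Integrable (fun t : ℝ => |t|) γ)
    {C : ENNReal} (hC : C ≠ ⊤) {m : Measure (X × ℝ)} (hm : m ≤ C • ν.prod γ)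
    {F F' G G' : X × ℝ → ℝ} (hF : AuxAdm ν F F') (hG : AuxAdm ν G G') :
    Integrable (fun z => (auxRR F F' z - auxRR G G' z) ^ 2) m ∧
    ∫ z, (auxRR F F' z - auxRR G G' z) ^ 2 ∂m ≤ C.toReal * (∫ t, (4 + 2 * |t|) ∂γ) *
      ((∫ z, (F z - G z) ^ 2 ∂(ν.prod volume)) + ∫ z, (F' z - G' z) ^ 2 ∂(ν.prod volume)) := by
  have hi := aux_sub_sq hF.meas hG.meas hF.int hG.int
  have hi' := aux_sub_sq hF.meas' hG.meas' hF.int' hG.int'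
  set N : X → ℝ := fun a => (∫ t, (F (a, t) - G (a, t)) ^ 2) + ∫ t, (F' (a, t) - G' (a, t)) ^ 2
    with hN
  have hNint : Integrable N ν := hi.integral_prod_left.add hi'.integral_prod_left
  have hNeq : ∫ a, N a ∂ν = (∫ z, (F z - G z) ^ 2 ∂(ν.prod volume)) +
      ∫ z, (F' z - G' z) ^ 2 ∂(ν.prod volume) := by
    rw [integral_prod _ hi, integral_prod _ hi', hN,
      integral_add hi.integral_prod_left hi'.integral_prod_left]
  have hpt : ∀ᵐ a ∂ν, ∀ s, (auxRR F F' (a, s) - auxRR G G' (a, s)) ^ 2 ≤ N a * (4 + 2 * |s|) := by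
    filter_upwards [hF.int.prod_right_ae, hF.int'.prod_right_ae, hG.int.prod_right_ae,
      hG.int'.prod_right_ae] with a h1 h2 h3 h4 s
    have m1 := hF.meas
    have m2 := hF.meas'
    have m3 := hG.meas
    have m4 := hG.meas'
    have := aux_line (hF.der a) (hG.der a) (by fun_prop) (by fun_prop) (by fun_prop)
      (by fun_prop) h1 h2 h3 h4 s
    rw [mul_comm (N a)]
    exact this
  have hγ4 : Integrable (fun t : ℝ => 4 + 2 * |t|) γ := (integrable_const _).add (hγ.const_mul 2)
  have hB : Integrable (fun z : X × ℝ => N z.1 * (4 + 2 * |z.2|)) (ν.prod γ) :=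
    hNint.mul_prod hγ4
  have hBC : Integrable (fun z : X × ℝ => N z.1 * (4 + 2 * |z.2|)) (C • ν.prod γ) :=
    hB.smul_measure hC
  have hBm := hBC.mono_measure hm
  have hpt2 : ∀ᵐ z ∂(ν.prod γ), (auxRR F F' z - auxRR G G' z) ^ 2 ≤ N z.1 * (4 + 2 * |z.2|) := by
    filter_upwards [Measure.quasiMeasurePreserving_fst.ae hpt] with z hz
    exact hz z.2
  have hpt3 : ∀ᵐ z ∂m, (auxRR F F' z - auxRR G G' z) ^ 2 ≤ N z.1 * (4 + 2 * |z.2|) :=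
    (Measure.absolutelyContinuous_of_le_smul hm).ae_le hpt2
  have hint : Integrable (fun z => (auxRR F F' z - auxRR G G' z) ^ 2) m := by
    refine Integrable.mono' hBm (((aux_RR_meas hF.meas hF.meas').sub
      (aux_RR_meas hG.meas hG.meas')).pow_const 2).aestronglyMeasurable ?_
    filter_upwards [hpt3] with z hz
    rwa [Real.norm_eq_abs, abs_sq]
  refine ⟨hint, ?_⟩
  calc _ ≤ ∫ z, N z.1 * (4 + 2 * |z.2|) ∂m := integral_mono_ae hint hBm hpt3
    _ ≤ ∫ z, N z.1 * (4 + 2 * |z.2|) ∂(C • ν.prod γ) := by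
        refine integral_mono_measure hm (Filter.Eventually.of_forall fun z => ?_) hBC
        have : 0 ≤ N z.1 := add_nonneg (integral_nonneg fun t => sq_nonneg _)
          (integral_nonneg fun t => sq_nonneg _)
        simp only [Pi.zero_apply]
        positivity
    _ = _ := by
        rw [integral_smul_measure, integral_prod_mul N (fun t : ℝ => 4 + 2 * |t|), hNeq,
          smul_eq_mul]
        ring

lemma aux_pt (s a b h l1 l2 : ℝ) (hs0 : 0 < s) (hl : |l1 - l2| ≤ |h|) :
    ‖((1 / 2) * a ^ 2 - l1) - ((1 / 2) * b ^ 2 - l2)‖ ≤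
      ((s / 2) * a ^ 2 + s) + (((1 / 2) * (1 + 1 / s)) * (a - b) ^ 2 + (1 / s) * h ^ 2) := by
    have e1 : |h| ≤ s + (1 / s) * h ^ 2 := by
      have : s * (1 / s) = 1 := by field_simp
      have hh : s * |h| ≤ s * (s + (1 / s) * h ^ 2) := by
        rw [mul_add, ← mul_assoc, this, ← sq_abs h]
        nlinarith [sq_nonneg (s - |h|), abs_nonneg h, sq_nonneg s, sq_nonneg |h|]
      exact le_of_mul_le_mul_left hh hs0
    have e2 : |2 * a * (a - b)| ≤ s * a ^ 2 + (1 / s) * (a - b) ^ 2 := by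
      have : s * (1 / s) = 1 := by field_simp
      have hh : s * |2 * a * (a - b)| ≤ s * (s * a ^ 2 + (1 / s) * (a - b) ^ 2) := by
        rw [mul_add, ← mul_assoc s (1 / s), this, ← abs_of_pos hs0, ← abs_mul, abs_of_pos hs0,
          abs_le]
        constructor <;> nlinarith [sq_nonneg (s * a - (a - b)), sq_nonneg (s * a + (a - b))]
      exact le_of_mul_le_mul_left hh hs0
    have e3 : (1 / 2) * a ^ 2 - (1 / 2) * b ^ 2 =
        (1 / 2) * (2 * a * (a - b)) - (1 / 2) * (a - b) ^ 2 := by ring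
    have e4 := sq_nonneg (a - b)
    have e5 := hl.trans e1
    rw [abs_le] at e2 e5
    rw [Real.norm_eq_abs, abs_le]
    constructor <;> linarith [e2.1, e2.2, e5.1, e5.2]

lemma aux_core {X : Type*} [MeasurableSpace X] {ν : Measure X} [SigmaFinite ν]
    {γ : Measure ℝ} [IsFiniteMeasure γ] (hγ : Integrable (fun t : ℝ => |t|) γ)
    {C : ENNReal} (hC : C ≠ ⊤) {m : Measure (X × ℝ)} [IsFiniteMeasure m]
    (hm : m ≤ C • ν.prod γ) (hm2 : m ≤ C • ν.prod volume)
    (hsq : Integrable (fun z : X × ℝ => z.2 ^ 2) m)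
    {F F' : X × ℝ → ℝ} (hF : AuxAdm ν F F') (ε : ℝ) (hε : 0 < ε) :
    ∃ δ > (0 : ℝ), ∀ G G' : X × ℝ → ℝ, AuxAdm ν G G' →
      (∫ z, (F z - G z) ^ 2 ∂(ν.prod volume)) + (∫ z, (F' z - G' z) ^ 2 ∂(ν.prod volume)) < δ →
      |(∫ z, ((1 / 2) * auxRR F F' z ^ 2 - Real.log (softg (F' z))) ∂m) -
        ∫ z, ((1 / 2) * auxRR G G' z ^ 2 - Real.log (softg (G' z))) ∂m| < ε := by
  have h0 : AuxAdm ν (fun _ : X × ℝ => (0 : ℝ)) (fun _ => 0) :=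
    ⟨fun a t => hasDerivAt_const _ _, measurable_const, measurable_const, by simp, by simp⟩
  have hR0 : ∀ z : X × ℝ, auxRR (fun _ : X × ℝ => (0 : ℝ)) (fun _ => 0) z = z.2 := by
    intro z
    simp [auxRR, aux_softg_zero]
  have hR2 : ∀ G G' : X × ℝ → ℝ, AuxAdm ν G G' → Integrable (fun z => auxRR G G' z ^ 2) m := by
    intro G G' hG
    have h1 := (aux_diff hγ hC hm hG h0).1
    simp only [hR0] at h1
    refine Integrable.mono' ((h1.const_mul 2).add (hsq.const_mul 2))
      ((aux_RR_meas hG.meas hG.meas').pow_const 2).aestronglyMeasurable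
      (Filter.Eventually.of_forall fun z => ?_)
    simp only [Real.norm_eq_abs, abs_sq, Pi.add_apply]
    nlinarith [sq_nonneg (auxRR G G' z - 2 * z.2)]
  have hL2m : ∀ H : X × ℝ → ℝ, Integrable (fun z => H z ^ 2) (ν.prod volume) →
      Integrable (fun z => H z ^ 2) m ∧
        ∫ z, H z ^ 2 ∂m ≤ C.toReal * ∫ z, H z ^ 2 ∂(ν.prod volume) := by
    intro H hH
    have h1 := hH.smul_measure hC
    refine ⟨h1.mono_measure hm2, ?_⟩
    have := integral_mono_measure hm2 (Filter.Eventually.of_forall fun z => sq_nonneg (H z)) h1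
    rwa [integral_smul_measure, smul_eq_mul] at this
  have hJ : ∀ G G' : X × ℝ → ℝ, AuxAdm ν G G' →
      Integrable (fun z => (1 / 2) * auxRR G G' z ^ 2 - Real.log (softg (G' z))) m := by
    intro G G' hG
    refine ((hR2 G G' hG).const_mul _).sub ?_
    refine Integrable.mono' ((integrable_const (1 : ℝ)).add (hL2m G' hG.int').1)
      (aux_logg_cont.measurable.comp hG.meas').aestronglyMeasurable
      (Filter.Eventually.of_forall fun z => ?_)
    have := aux_logg_lip (G' z) 0
    rw [aux_softg_zero, Real.log_one, sub_zero, sub_zero] at this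
    simp only [Real.norm_eq_abs, Pi.add_apply]
    refine this.trans ?_
    rw [abs_le]
    constructor <;> nlinarith [sq_nonneg (G' z - 1), sq_nonneg (G' z + 1), sq_nonneg (G' z)]
  set A := ∫ z, auxRR F F' z ^ 2 ∂m with hA
  have hA0 : 0 ≤ A := integral_nonneg fun z => sq_nonneg _
  set T := m.real Set.univ with hT
  have hT0 : 0 ≤ T := measureReal_nonneg
  set K := C.toReal * ∫ t, (4 + 2 * |t|) ∂γ with hK
  have hK0 : 0 ≤ K := mul_nonneg ENNReal.toReal_nonneg (integral_nonneg fun t => by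
    simp only [Pi.zero_apply]; positivity)
  have hM0 : 0 ≤ C.toReal := ENNReal.toReal_nonneg
  set M := C.toReal with hM
  set s := ε / (2 * (A / 2 + T + 1)) with hs
  have hs0 : 0 < s := by positivity
  set B := (1 / 2) * (1 + 1 / s) * K + M / s with hB
  have hB0 : 0 ≤ B := by positivity
  refine ⟨ε / (2 * (B + 1)), by positivity, ?_⟩
  intro G G' hG hD
  obtain ⟨hd1, hd2⟩ := aux_diff hγ hC hm hF hG
  obtain ⟨he1, he2⟩ := hL2m (fun z => F' z - G' z)
    (aux_sub_sq hF.meas' hG.meas' hF.int' hG.int')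
  have hn1 : 0 ≤ ∫ z, (F z - G z) ^ 2 ∂(ν.prod volume) := integral_nonneg fun z => sq_nonneg _
  have hn2 : 0 ≤ ∫ z, (F' z - G' z) ^ 2 ∂(ν.prod volume) := integral_nonneg fun z => sq_nonneg _
  rw [← integral_sub (hJ F F' hF) (hJ G G' hG)]
  set D := (∫ z, (F z - G z) ^ 2 ∂(ν.prod volume)) + ∫ z, (F' z - G' z) ^ 2 ∂(ν.prod volume)
    with hDdef
  have hbi1 : Integrable (fun z => (s / 2) * auxRR F F' z ^ 2 + s) m :=
    ((hR2 F F' hF).const_mul _).add (integrable_const _)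
  have hbi2 : Integrable (fun z => ((1 / 2) * (1 + 1 / s)) * (auxRR F F' z - auxRR G G' z) ^ 2 +
      (1 / s) * (F' z - G' z) ^ 2) m := (hd1.const_mul _).add (he1.const_mul _)
  have hbound : |∫ z, (((1 / 2) * auxRR F F' z ^ 2 - Real.log (softg (F' z))) -
      ((1 / 2) * auxRR G G' z ^ 2 - Real.log (softg (G' z)))) ∂m| ≤
      ∫ z, (((s / 2) * auxRR F F' z ^ 2 + s) +
        (((1 / 2) * (1 + 1 / s)) * (auxRR F F' z - auxRR G G' z) ^ 2 +
          (1 / s) * (F' z - G' z) ^ 2)) ∂m := by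
    rw [← Real.norm_eq_abs]
    refine norm_integral_le_of_norm_le (hbi1.add hbi2) (Filter.Eventually.of_forall fun z => ?_)
    have hl := aux_logg_lip (F' z) (G' z)
    exact aux_pt s _ _ _ _ _ hs0 hl
  refine hbound.trans_lt ?_
  rw [integral_add hbi1 hbi2,
    integral_add ((hR2 F F' hF).const_mul _) (integrable_const _),
    integral_add (hd1.const_mul _) (he1.const_mul _), integral_const_mul, integral_const_mul,
    integral_const_mul, integral_const, ← hA, ← hT, smul_eq_mul]
  have f1 : s / 2 * A + T * s < ε / 2 := by
    have : s * (A / 2 + T + 1) = ε / 2 := by rw [hs]; field_simp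
    nlinarith
  have f2 : (1 / 2) * (1 + 1 / s) * (∫ z, (auxRR F F' z - auxRR G G' z) ^ 2 ∂m) +
      1 / s * (∫ z, (F' z - G' z) ^ 2 ∂m) ≤ B * D := by
    have g1 : (1 / 2) * (1 + 1 / s) * (∫ z, (auxRR F F' z - auxRR G G' z) ^ 2 ∂m) ≤
      (1 / 2) * (1 + 1 / s) * (K * D) := mul_le_mul_of_nonneg_left hd2 (by positivity)
    have g2 : 1 / s * (∫ z, (F' z - G' z) ^ 2 ∂m) ≤ 1 / s * (M * D) := by
      refine mul_le_mul_of_nonneg_left (he2.trans ?_) (by positivity)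
      exact mul_le_mul_of_nonneg_left (by rw [hDdef]; linarith) hM0
    have : B * D = (1 / 2) * (1 + 1 / s) * (K * D) + 1 / s * (M * D) := by rw [hB]; ring
    linarith
  have f3 : B * D < ε / 2 := by
    have hD0 : 0 ≤ D := by rw [hDdef]; linarith
    rw [lt_div_iff₀ (by positivity)] at hD
    nlinarith
  linarith

lemma aux_update_snoc (k : ℕ) (y : Fin (k + 1) → ℝ) (t : ℝ) :
    Function.update y (Fin.last k) t =
      (Fin.snoc (fun i : Fin k => y i.castSucc) t : Fin (k + 1) → ℝ) := by
  ext i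
  refine Fin.lastCases ?_ (fun j => ?_) i
  · simp
  · simp

lemma aux_snoc_self (k : ℕ) (y : Fin (k + 1) → ℝ) :
    (Fin.snoc (fun i : Fin k => y i.castSucc) (y (Fin.last k)) : Fin (k + 1) → ℝ) = y := by
  rw [← aux_update_snoc, Function.update_eq_self]

lemma aux_snoc_meas (k : ℕ) :
    Measurable (fun z : (Fin k → ℝ) × ℝ => (Fin.snoc z.1 z.2 : Fin (k + 1) → ℝ)) := by
  rw [measurable_pi_iff]
  intro i
  refine Fin.lastCases ?_ (fun j => ?_) i
  · simp only [Fin.snoc_last]; fun_prop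
  · simp only [Fin.snoc_castSucc]; fun_prop

lemma aux_int_snoc (k : ℕ) (f : (Fin (k + 1) → ℝ) → ℝ) (hf : Measurable f) :
    (Integrable f → Integrable (fun z : (Fin k → ℝ) × ℝ => f (Fin.snoc z.1 z.2))
      ((volume : Measure (Fin k → ℝ)).prod volume)) ∧
    ∫ z : (Fin k → ℝ) × ℝ, f (Fin.snoc z.1 z.2) ∂((volume : Measure (Fin k → ℝ)).prod volume) =
      ∫ x, f x := by
  have hq := aux_snoc_mp (k := k) (volume : Measure ℝ)
  have hm : Measurable (fun z : (Fin k → ℝ) × ℝ => f (Fin.snoc z.1 z.2)) :=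
    hf.comp (aux_snoc_meas k)
  constructor
  · intro h
    refine (hq.integrable_comp hm.aestronglyMeasurable).1 ?_
    simp only [Function.comp_def, aux_snoc_self]
    exact h
  · have h1 : (volume : Measure (Fin k → ℝ)).prod volume = _ := hq.map_eq.symm
    rw [h1, integral_map hq.measurable.aemeasurable hm.aestronglyMeasurable]
    simp only [aux_snoc_self]
    rfl

lemma aux_adm (k : ℕ) (f f' : (Fin (k + 1) → ℝ) → ℝ)
    (hf' : ∀ x : Fin (k + 1) → ℝ,
      HasDerivAt (fun t => f (Function.update x (Fin.last k) t)) (f' x) (x (Fin.last k)))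
    (hfm : Measurable f) (hfm' : Measurable f')
    (h2 : Integrable (fun x => f x ^ 2)) (h2' : Integrable (fun x => f' x ^ 2)) :
    AuxAdm (volume : Measure (Fin k → ℝ)) (fun z => f (Fin.snoc z.1 z.2))
      (fun z => f' (Fin.snoc z.1 z.2)) where
  der a t := by
    have := hf' (Fin.snoc a t)
    simpa [aux_update_snoc] using this
  meas := hfm.comp (aux_snoc_meas k)
  meas' := hfm'.comp (aux_snoc_meas k)
  int := (aux_int_snoc k (fun x => f x ^ 2) (hfm.pow_const 2)).1 h2
  int' := (aux_int_snoc k (fun x => f' x ^ 2) (hfm'.pow_const 2)).1 h2'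

lemma aux_objective (d k : ℕ) (hkd : k + 1 ≤ d)
    (p : (Fin d → ℝ) → ℝ) (hpmeas : Measurable p) (hp0 : ∀ x, 0 ≤ p x)
    (f f' : (Fin (k + 1) → ℝ) → ℝ) (hfm : Measurable f) (hfm' : Measurable f') :
    mapObjective d k hkd p f f' =
      ∫ z, ((1 / 2) * auxRR (fun z => f (Fin.snoc z.1 z.2)) (fun z => f' (Fin.snoc z.1 z.2)) z ^ 2
        - Real.log (softg (f' (Fin.snoc z.1 z.2))))
        ∂(((volume : Measure (Fin d → ℝ)).withDensity (fun x => ENNReal.ofReal (p x))).map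
          (auxProj d k hkd)) := by
  have m1 : Measurable (fun z : (Fin k → ℝ) × ℝ => f (Fin.snoc z.1 z.2)) :=
    hfm.comp (aux_snoc_meas k)
  have m2 : Measurable (fun z : (Fin k → ℝ) × ℝ => f' (Fin.snoc z.1 z.2)) :=
    hfm'.comp (aux_snoc_meas k)
  have m3 : Measurable (fun z : (Fin k → ℝ) × ℝ => (1 / 2) * auxRR
      (fun z => f (Fin.snoc z.1 z.2)) (fun z => f' (Fin.snoc z.1 z.2)) z ^ 2
        - Real.log (softg (f' (Fin.snoc z.1 z.2)))) :=
    (((aux_RR_meas m1 m2).pow_const 2).const_mul _).sub (aux_logg_cont.measurable.comp m2)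
  rw [integral_map (aux_measurable_proj d k hkd).aemeasurable m3.aestronglyMeasurable,
    integral_withDensity_eq_integral_toReal_smul hpmeas.ennreal_ofReal
      (Filter.Eventually.of_forall fun x => ENNReal.ofReal_lt_top)]
  unfold mapObjective
  refine integral_congr_ae (Filter.Eventually.of_forall fun x => ?_)
  have e : (Fin.snoc (auxProj d k hkd x).1 (auxProj d k hkd x).2 : Fin (k + 1) → ℝ) =
      fun i => x (Fin.castLE hkd i) := aux_snoc_self k (fun i => x (Fin.castLE hkd i))
  simp only [ENNReal.toReal_ofReal (hp0 x), smul_eq_mul, e]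
  rw [mul_comm (p x)]
  simp only [rectifiedMap, auxRR, aux_update_snoc]
  rfl

/-- Under `p ≤ C_π η` (with `η` the standard Gaussian density) and `g` the
modified soft-plus, the map `f ↦ L_k(f)` is continuous from `H^{1,k}(ℝ^{k+1})`
(with squared norm `‖f‖²_{L²} + ‖∂ₖ f‖²_{L²}`) to `ℝ`: at every admissible `f₁`,
for every `ε > 0` there is `δ > 0` such that any admissible `f₂` with
`‖f₁ − f₂‖²_{H^{1,k}} < δ` satisfies `|L_k(f₁) − L_k(f₂)| < ε`. -/
theorem objective_continuous (d k : ℕ) (hkd : k + 1 ≤ d) (Cπ : ℝ)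
    (p : (Fin d → ℝ) → ℝ) (hpmeas : Measurable p) (hp0 : ∀ x, 0 ≤ p x)
    (hp : ∀ x, p x ≤ Cπ * gaussDensity d x)
    (f₁ f₁' : (Fin (k + 1) → ℝ) → ℝ)
    (hf₁' : ∀ x : Fin (k + 1) → ℝ,
      HasDerivAt (fun t => f₁ (Function.update x (Fin.last k) t)) (f₁' x) (x (Fin.last k)))
    (hf₁meas : Measurable f₁) (hf₁'meas : Measurable f₁')
    (hf₁L2 : Integrable (fun x => f₁ x ^ 2)) (hf₁'L2 : Integrable (fun x => f₁' x ^ 2)) :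
    ∀ ε > (0 : ℝ), ∃ δ > (0 : ℝ),
      ∀ f₂ f₂' : (Fin (k + 1) → ℝ) → ℝ,
        (∀ x : Fin (k + 1) → ℝ, HasDerivAt (fun t => f₂ (Function.update x (Fin.last k) t))
          (f₂' x) (x (Fin.last k))) →
        Measurable f₂ → Measurable f₂' →
        Integrable (fun x => f₂ x ^ 2) → Integrable (fun x => f₂' x ^ 2) →
        (∫ x, (f₁ x - f₂ x) ^ 2) + (∫ x, (f₁' x - f₂' x) ^ 2) < δ →
        |mapObjective d k hkd p f₁ f₁' - mapObjective d k hkd p f₂ f₂'| < ε := by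
  intro ε hε
  set m := ((volume : Measure (Fin d → ℝ)).withDensity (fun x => ENNReal.ofReal (p x))).map
    (auxProj d k hkd) with hmdef
  have hm0 := aux_dom0 d k hkd Cπ p hp
  have hm1 := aux_dom d k hkd Cπ p hp
  rw [← hmdef] at hm0 hm1
  have hm2 : m ≤ ENNReal.ofReal Cπ • ((volume : Measure (Fin k → ℝ)).prod volume) := by
    refine hm1.trans ?_
    rw [Measure.le_iff]
    intro s _
    simp only [Measure.smul_apply, smul_eq_mul]
    exact mul_le_mul' le_rfl (aux_prod_le k s)
  have hγ2 : MemLp (id : ℝ → ℝ) 2 (ProbabilityTheory.gaussianReal 0 1) :=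
    ProbabilityTheory.memLp_id_gaussianReal 2
  have hγ : Integrable (fun t : ℝ => |t|) (ProbabilityTheory.gaussianReal 0 1) :=
    (hγ2.integrable (by norm_num)).abs
  have hfin : IsFiniteMeasure m := by
    refine ⟨lt_of_le_of_lt (hm0 Set.univ) ?_⟩
    simp
  have hsq : Integrable (fun z : (Fin k → ℝ) × ℝ => z.2 ^ 2) m := by
    have h1 : Integrable (fun t : ℝ => t ^ 2) (ProbabilityTheory.gaussianReal 0 1) := by
      simpa using hγ2.integrable_sq
    have h2 := (h1.comp_snd (Measure.pi fun _ : Fin k => ProbabilityTheory.gaussianReal 0 1))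
    exact (h2.smul_measure ENNReal.ofReal_ne_top).mono_measure hm0
  obtain ⟨δ, hδ, H⟩ := aux_core hγ ENNReal.ofReal_ne_top hm1 hm2 hsq
    (aux_adm k f₁ f₁' hf₁' hf₁meas hf₁'meas hf₁L2 hf₁'L2) ε hε
  refine ⟨δ, hδ, ?_⟩
  intro f₂ f₂' hf₂' hf₂meas hf₂'meas hf₂L2 hf₂'L2 hD
  rw [aux_objective d k hkd p hpmeas hp0 f₁ f₁' hf₁meas hf₁'meas,
    aux_objective d k hkd p hpmeas hp0 f₂ f₂' hf₂meas hf₂'meas]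
  refine H _ _ (aux_adm k f₂ f₂' hf₂' hf₂meas hf₂'meas hf₂L2 hf₂'L2) ?_
  rw [(aux_int_snoc k (fun x => (f₁ x - f₂ x) ^ 2) ((hf₁meas.sub hf₂meas).pow_const 2)).2,
    (aux_int_snoc k (fun x => (f₁' x - f₂' x) ^ 2) ((hf₁'meas.sub hf₂'meas).pow_const 2)).2]
  exact hD
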